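/- Let q ≥ 2 be an integer. For all sufficiently large t, the q-colour on-line Ramsey number of the complete bipartite graph K_{t,t} satisfies r̃_q(K_{t,t}) ≤ 48 · q^{t+2} · t^{3 - 1/q} · (log t)^{1/q}, where log denotes the logarithm to the base q. -/

import Mathlib

/-- A monochromatic clique of size `k` in colour `i` for an edge-colouring `c` of `K_n`. -/
def monoClique {n q : ℕ} (c : Sym2 (Fin n) → Fin q) (i : Fin q) (k : ℕ) : Prop :=
  ∃ A : Finset (Fin n), A.card = k ∧ ∀ u ∈ A, ∀ v ∈ A, u ≠ v → c s(u, v) = i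

/-- The `q`-colour Ramsey number `r(k 0, …, k (q-1))`. -/
noncomputable def ramseyQ {q : ℕ} (k : Fin q → ℕ) : ℕ :=
  sInf {n : ℕ | ∀ c : Sym2 (Fin n) → Fin q, ∃ i : Fin q, monoClique c i (k i)}

/-- The two-colour Ramsey number `r(s, t)`. -/
noncomputable def ramsey2 (s t : ℕ) : ℕ := ramseyQ ![s, t]

/-- A history in the on-line Ramsey game: the previously presented edges with their colours. -/
abbrev History (q : ℕ) := List (Sym2 ℕ × Fin q)

/-- A Builder strategy is valid if it always presents a genuine new edge. -/
def validBuilder {q : ℕ} (B : History q → Sym2 ℕ) : Prop :=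
  ∀ h : History q, ¬ (B h).IsDiag ∧ B h ∉ h.map Prod.fst

/-- The play determined by a Builder strategy `B` and a Painter strategy `P`:
`play B P n` is the history after `n` rounds. -/
def play {q : ℕ} (B : History q → Sym2 ℕ) (P : History q → Sym2 ℕ → Fin q) : ℕ → History q
  | 0 => []
  | n + 1 =>
      let h := play B P n
      h ++ [(B h, P h (B h))]

/-- The graph formed by the edges of colour `i` in a history. -/
def colourGraph {q : ℕ} (h : History q) (i : Fin q) : SimpleGraph ℕ :=
  SimpleGraph.fromEdgeSet {e | (e, i) ∈ h}

/-- `H` contains a copy of `G` as a subgraph. -/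
def containsCopy {V : Type*} (G : SimpleGraph V) (H : SimpleGraph ℕ) : Prop :=
  ∃ f : V → ℕ, Function.Injective f ∧ ∀ u v, G.Adj u v → H.Adj (f u) (f v)

/-- The `q`-colour on-line Ramsey number of `G`: the least `N` such that Builder has a
valid strategy forcing, against every Painter strategy, a monochromatic copy of `G`
within at most `N` rounds. -/
noncomputable def onlineRamsey {V : Type*} (q : ℕ) (G : SimpleGraph V) : ℕ :=
  sInf {N : ℕ | ∃ B : History q → Sym2 ℕ, validBuilder B ∧
    ∀ P : History q → Sym2 ℕ → Fin q,
      ∃ n ≤ N, ∃ i : Fin q, containsCopy G (colourGraph (play B P n) i)}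

/-!
Builder plays in two stages on vertex sets `X`, `Y`, `Z` with `|X| = q t²`.

First he presents all edges between `X` and `Y`. Kővári–Sós–Turán counting gives a colour `i`, a set
`T ⊆ X` with `|T| = t - s` and a set `S ⊆ Y` with `|S| = q t²` such that all edges between `T` and
`S` have colour `i`. Taking `s ≈ 2 log_q t` saves the factor `q ^ s ≥ t²` that makes this stage
cheap.

Then he presents all edges between `S` and the new set `Z`. In colour `i` a `K_{t,s}` is now enough,
as `T` completes it to a `K_{t,t}`, so each `z ∈ Z` may be assigned a degree threshold below the
average `t²` in colour `i` and above it in the others. Shifting the thresholds by `-(q - 1) t l` and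
`t l` changes the number of vertices `Z` needs by the factors `exp ((q - 1) l)` and `exp (-l)`
respectively. The requirements for `K_{t,s}` and `K_{t,t}` agree when `s exp (q l) = t`, so that `Z`
gets smaller by the factor `exp (-l) = (s / t) ^ (1 / q)`.
-/

open Finset
open Filter (atTop)
open Real (exp log logb)

/-! ### Forcing a position -/

section Forcing

variable {q : ℕ} {W : History q → Prop} {h h' : History q}

/-- Presenting the edge `e` is a legal move of Builder after the history `h`. -/
def IsLegalMove (h : History q) (e : Sym2 ℕ) : Prop :=
  ¬ e.IsDiag ∧ e ∉ h.map Prod.fst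

/-- Builder can force the winning condition `W` to hold after *exactly* `n` further rounds. This is
the backward-induction counterpart of a Builder strategy, and lets strategies be built from the last
stage to the first. -/
def CanForce (W : History q → Prop) : ℕ → History q → Prop
  | 0, h => W h
  | n + 1, h => ∃ e, IsLegalMove h e ∧ ∀ c : Fin q, CanForce W n (h ++ [(e, c)])

theorem exists_isLegalMove (h : History q) : ∃ e, IsLegalMove h e := by
  have hinj : Function.Injective fun n : ℕ => s(0, n + 1) := fun a b hab => by simpa using hab
  obtain ⟨_, ⟨n, rfl⟩, hn⟩ :=
    (Set.infinite_range_of_injective hinj).exists_notMem_finset (h.map Prod.fst).toFinset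
  exact ⟨s(0, n + 1), by simp, fun hmem => hn (List.mem_toFinset.2 hmem)⟩

theorem length_play (B : History q → Sym2 ℕ) (P : History q → Sym2 ℕ → Fin q) (n : ℕ) :
    (play B P n).length = n := by
  induction n with
  | zero => rfl
  | succ n ih => simp [play, ih]

theorem CanForce.exists_validBuilder {N : ℕ} (hW : CanForce W N []) :
    ∃ B : History q → Sym2 ℕ, validBuilder B ∧ ∀ P, W (play B P N) := by
  have exists_move (h : History q) : ∃ e, IsLegalMove h e ∧ ∀ n, n + 1 + h.length = N →
      CanForce W (n + 1) h → ∀ c, CanForce W n (h ++ [(e, c)]) := by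
    by_cases hn : ∃ n, n + 1 + h.length = N ∧ CanForce W (n + 1) h
    · obtain ⟨n, hnN, e, he, hc⟩ := hn
      refine ⟨e, he, fun n' hn' _ => ?_⟩
      obtain rfl : n' = n := by omega
      exact hc
    · obtain ⟨e, he⟩ := exists_isLegalMove h
      exact ⟨e, he, fun n hnN hforce => absurd ⟨n, hnN, hforce⟩ hn⟩
  choose B hlegal hforce using exists_move
  refine ⟨B, hlegal, fun P => ?_⟩
  have invariant (k : ℕ) : ∀ n, n + k = N → CanForce W n (play B P k) := by
    induction k with
    | zero => rintro n rfl; exact hW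
    | succ k ih =>
      intro n hn
      exact hforce _ n (by rw [length_play]; omega) (ih (n + 1) (by omega)) _
  exact invariant N 0 (zero_add N)

theorem onlineRamsey_le_of_canForce {V : Type*} {G : SimpleGraph V} {N : ℕ}
    (hN : CanForce (fun h : History q => ∃ i, containsCopy G (colourGraph h i)) N []) :
    onlineRamsey q G ≤ N := by
  obtain ⟨B, hB, hwin⟩ := hN.exists_validBuilder
  exact Nat.sInf_le ⟨B, hB, fun P => ⟨N, le_rfl, hwin P⟩⟩

theorem CanForce.of_forall_colouring [NeZero q] {n : ℕ} {L : List (Sym2 ℕ)} (hL : L.Nodup)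
    (hlegal : ∀ e ∈ L, IsLegalMove h e)
    (hc : ∀ c : Sym2 ℕ → Fin q, CanForce W n (h ++ L.map fun e => (e, c e))) :
    CanForce W (n + L.length) h := by
  induction L generalizing h with
  | nil => simpa using hc fun _ => 0
  | cons e L ih =>
    obtain ⟨heL, hL⟩ := List.nodup_cons.1 hL
    refine ⟨e, hlegal e (by simp), fun c₀ => ih hL (fun e' he' => ?_) fun c => ?_⟩
    · have hne : e' ≠ e := ne_of_mem_of_not_mem he' heL
      have hlegal' := hlegal e' (List.mem_cons_of_mem e he')
      exact ⟨hlegal'.1, by simpa [hne] using hlegal'.2⟩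
    · have hupdate : L.map (fun e' => (e', Function.update c e c₀ e')) =
          L.map fun e' => (e', c e') :=
        List.map_congr_left fun e' he' => by
          rw [Function.update_of_ne (ne_of_mem_of_not_mem he' heL)]
      simpa [hupdate] using hc (Function.update c e c₀)

/-- The rounds in which Builder presents all edges between `X` and `Y`, and Painter colours them by
`c`. -/
noncomputable def bipartiteRounds (X Y : Finset ℕ) (c : Sym2 ℕ → Fin q) : History q :=
  (X ×ˢ Y).toList.map fun p => (s(p.1, p.2), c s(p.1, p.2))

theorem notMem_map_fst_bipartiteRounds {X Y : Finset ℕ} (c : Sym2 ℕ → Fin q) (x : ℕ) {z : ℕ}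
    (hX : z ∉ X) (hY : z ∉ Y) : s(x, z) ∉ (bipartiteRounds X Y c).map Prod.fst := by
  simp only [bipartiteRounds, List.map_map, List.mem_map, mem_toList, mem_product]
  rintro ⟨⟨x', y'⟩, ⟨hx', hy'⟩, heq⟩
  rcases Sym2.eq_iff.1 heq with ⟨-, rfl⟩ | ⟨rfl, -⟩
  · exact hY hy'
  · exact hX hx'

theorem CanForce.of_forall_bipartiteRounds [NeZero q] {n : ℕ} {X Y : Finset ℕ}
    (hXY : Disjoint X Y) (hfresh : ∀ x ∈ X, ∀ y ∈ Y, s(x, y) ∉ h.map Prod.fst)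
    (hc : ∀ c : Sym2 ℕ → Fin q, CanForce W n (h ++ bipartiteRounds X Y c)) :
    CanForce W (n + #X * #Y) h := by
  have hne {x y : ℕ} (hx : x ∈ X) (hy : y ∈ Y) : x ≠ y := hXY.forall_ne_finset hx hy
  have hlength : #X * #Y = ((X ×ˢ Y).toList.map fun p => s(p.1, p.2)).length := by simp
  rw [hlength]
  refine CanForce.of_forall_colouring ((nodup_toList _).map_on ?_) ?_ fun c => ?_
  · rintro ⟨x, y⟩ hp ⟨x', y'⟩ hp' heq
    simp only [mem_toList, mem_product] at hp hp'
    rcases Sym2.eq_iff.1 heq with ⟨rfl, rfl⟩ | ⟨rfl, -⟩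
    · rfl
    · exact absurd rfl (hne hp.1 hp'.2)
  · simp only [List.mem_map, mem_toList, mem_product]
    rintro _ ⟨⟨x, y⟩, ⟨hx, hy⟩, rfl⟩
    exact ⟨hne hx hy, hfresh x hx y hy⟩
  · simpa [bipartiteRounds, Function.comp_def] using hc c

theorem colourGraph_mono (hsub : h ⊆ h') (i : Fin q) : colourGraph h i ≤ colourGraph h' i :=
  SimpleGraph.fromEdgeSet_mono fun _ he => hsub he

theorem isCompleteBetween_colourGraph_bipartiteRounds {X Y S T : Finset ℕ} {c : Sym2 ℕ → Fin q}
    {i : Fin q} (hXY : Disjoint X Y) (hS : S ⊆ X) (hT : T ⊆ Y)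
    (hc : ∀ x ∈ S, ∀ y ∈ T, c s(x, y) = i) :
    (colourGraph (bipartiteRounds X Y c) i).IsCompleteBetween S T := by
  intro x hx y hy
  have hround : (s(x, y), i) ∈ bipartiteRounds X Y c :=
    List.mem_map.2 ⟨(x, y), by simp [hS hx, hT hy], by rw [hc x hx y hy]⟩
  exact (SimpleGraph.fromEdgeSet_adj _).2 ⟨hround, hXY.forall_ne_finset (hS hx) (hT hy)⟩

theorem containsCopy_completeBipartiteGraph {s t : ℕ} {G : SimpleGraph ℕ} {S T : Finset ℕ}
    (hG : G.IsCompleteBetween S T) (hS : #S = s) (hT : #T = t) :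
    containsCopy (completeBipartiteGraph (Fin s) (Fin t)) G := by
  obtain ⟨f⟩ : (completeBipartiteGraph (Fin s) (Fin t)).IsContained G :=
    SimpleGraph.completeBipartiteGraph_isContained_iff.2 ⟨S, T, by simpa, by simpa, hG⟩
  exact ⟨f, f.injective, fun _ _ hadj => f.toHom.map_adj hadj⟩

end Forcing

/-! ### Kővári–Sós–Turán counting -/

section Counting

variable {α β ι : Type*} {A : Finset α} {B : Finset β} {τ : ℕ}

theorem exists_biclique_of_le_card_filter (r : α → β → Prop) [∀ a b, Decidable (r a b)] {d n : ℕ}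
    (hτ : τ ≤ #A) (hd : ∀ b ∈ B, d ≤ #{a ∈ A | r a b})
    (hn : n * (#A).choose τ ≤ #B * d.choose τ) :
    ∃ T ⊆ A, #T = τ ∧ ∃ S ⊆ B, #S = n ∧ ∀ x ∈ T, ∀ y ∈ S, r x y := by
  let R (T : Finset α) (b : β) : Prop := ∀ x ∈ T, r x b
  have hbelow (b : β) (hb : b ∈ B) : d.choose τ ≤ #((A.powersetCard τ).bipartiteBelow R b) := by
    calc d.choose τ ≤ (#{a ∈ A | r a b}).choose τ := Nat.choose_le_choose τ (hd b hb)
      _ = #(powersetCard τ {a ∈ A | r a b}) := (card_powersetCard _ _).symm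
      _ ≤ #((A.powersetCard τ).bipartiteBelow R b) := card_le_card fun T hT => by
        obtain ⟨hTA, hTc⟩ := mem_powersetCard.1 hT
        exact mem_filter.2 ⟨mem_powersetCard.2 ⟨hTA.trans (filter_subset _ _), hTc⟩,
          fun x hx => (mem_filter.1 (hTA hx)).2⟩
  have hsum : ∑ _T ∈ A.powersetCard τ, n ≤ ∑ T ∈ A.powersetCard τ, #(B.bipartiteAbove R T) := by
    calc ∑ _T ∈ A.powersetCard τ, n = n * (#A).choose τ := by simp [mul_comm]
      _ ≤ #B * d.choose τ := hn
      _ ≤ ∑ b ∈ B, #((A.powersetCard τ).bipartiteBelow R b) := card_nsmul_le_sum _ _ _ hbelow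
      _ = _ := (sum_card_bipartiteAbove_eq_sum_card_bipartiteBelow R).symm
  obtain ⟨T, hT, hTn⟩ := exists_le_of_sum_le (powersetCard_nonempty.2 hτ) hsum
  obtain ⟨S, hS, hSn⟩ := exists_subset_card_eq hTn
  obtain ⟨hTA, hTc⟩ := mem_powersetCard.1 hT
  exact ⟨T, hTA, hTc, S, hS.trans (filter_subset _ _), hSn,
    fun x hx y hy => (mem_filter.1 (hS hy)).2 x hx⟩

variable [Fintype ι] [Nonempty ι]

theorem exists_le_card_fiber_of_sum_le_card [DecidableEq ι] (f : α → ι) {d : ι → ℕ}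
    (hd : ∑ i, d i ≤ #A) : ∃ i, d i ≤ #{a ∈ A | f a = i} := by
  rw [card_eq_sum_card_fiberwise (t := univ) fun a _ => mem_univ (f a)] at hd
  simpa using exists_le_of_sum_le univ_nonempty hd

theorem exists_card_le_card_mul_card_fiber [DecidableEq ι] (f : α → ι) (A : Finset α) :
    ∃ i, #A ≤ Fintype.card ι * #{a ∈ A | f a = i} := by
  have hsum : ∑ _i : ι, #A ≤ ∑ i, Fintype.card ι * #{a ∈ A | f a = i} := by
    rw [← mul_sum, ← card_eq_sum_card_fiberwise fun a _ => mem_univ (f a)]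
    simp
  simpa using exists_le_of_sum_le univ_nonempty hsum

theorem exists_monochromatic_biclique (c : α → β → ι) {d n : ι → ℕ} (hτ : τ ≤ #A)
    (hd : ∑ i, d i ≤ #A)
    (hn : ∀ i, n i * (#A).choose τ * Fintype.card ι ≤ #B * (d i).choose τ) :
    ∃ i, ∃ T ⊆ A, #T = τ ∧ ∃ S ⊆ B, #S = n i ∧ ∀ x ∈ T, ∀ y ∈ S, c x y = i := by
  classical
  have hcolour (b : β) := exists_le_card_fiber_of_sum_le_card (fun a => c a b) hd
  choose g hg using hcolour
  obtain ⟨i, hi⟩ := exists_card_le_card_mul_card_fiber g B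
  have hcount : n i * (#A).choose τ ≤ #{b ∈ B | g b = i} * (d i).choose τ := by
    refine Nat.le_of_mul_le_mul_right (c := Fintype.card ι) ?_ Fintype.card_pos
    calc n i * (#A).choose τ * Fintype.card ι ≤ #B * (d i).choose τ := hn i
      _ ≤ Fintype.card ι * #{b ∈ B | g b = i} * (d i).choose τ := by gcongr
      _ = _ := by ring
  have hdegree : ∀ b ∈ ({b ∈ B | g b = i} : Finset β), d i ≤ #{a ∈ A | c a b = i} := by
    intro b hb
    obtain rfl := (mem_filter.1 hb).2
    exact hg b
  obtain ⟨T, hTA, hTc, S, hSB, hSc, hTS⟩ :=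
    exists_biclique_of_le_card_filter (fun a b => c a b = i) hτ hdegree hcount
  exact ⟨i, T, hTA, hTc, S, hSB.trans (filter_subset _ _), hSc, hTS⟩

end Counting

/-! ### The two-stage strategy -/

section Strategy

variable {q : ℕ} [NeZero q] {s t : ℕ}

theorem canForce_of_isCompleteBetween {h : History q} {i : Fin q} {S T Z : Finset ℕ}
    {d : Fin q → ℕ} (hTS : (colourGraph h i).IsCompleteBetween T S) (hT : #T + s = t)
    (hS : t ≤ #S) (hSZ : Disjoint S Z) (hTZ : Disjoint T Z)
    (hfresh : ∀ x ∈ S, ∀ z ∈ Z, s(x, z) ∉ h.map Prod.fst) (hd : ∑ j, d j ≤ #S)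
    (hi : s * (#S).choose t * q ≤ #Z * (d i).choose t)
    (hne : ∀ j ≠ i, t * (#S).choose t * q ≤ #Z * (d j).choose t) :
    CanForce (fun h : History q => ∃ j, containsCopy (completeBipartiteGraph (Fin t) (Fin t))
      (colourGraph h j)) (#S * #Z) h := by
  rw [← zero_add (#S * #Z)]
  refine CanForce.of_forall_bipartiteRounds hSZ hfresh fun c => ?_
  have hn (j : Fin q) : Function.update (fun _ => t) i s j * (#S).choose t * Fintype.card (Fin q) ≤
      #Z * (d j).choose t := by
    rw [Fintype.card_fin]
    obtain rfl | hj := eq_or_ne j i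
    · simpa using hi
    · simpa [hj] using hne j hj
  obtain ⟨j, T', hT'S, hT', R, hRZ, hR, hc⟩ :=
    exists_monochromatic_biclique (fun x y => c s(x, y)) hS hd hn
  have hRT' : (colourGraph (h ++ bipartiteRounds S Z c) j).IsCompleteBetween T' R :=
    fun _ hx _ hy => colourGraph_mono (List.subset_append_right _ _) j
      (isCompleteBetween_colourGraph_bipartiteRounds hSZ hT'S hRZ hc hx hy)
  refine ⟨j, ?_⟩
  obtain rfl | hj := eq_or_ne j i
  · rw [Function.update_self] at hR
    have hTR : Disjoint T R := disjoint_of_subset_right hRZ hTZ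
    refine containsCopy_completeBipartiteGraph (S := T') (T := T ∪ R) ?_ hT'
      (by rw [card_union_of_disjoint hTR, hR, hT])
    rintro x hx y hy
    obtain hy | hy := mem_union.1 hy
    · exact (colourGraph_mono (List.subset_append_left _ _) j (hTS hy (hT'S hx))).symm
    · exact hRT' hx hy
  · rw [Function.update_of_ne hj] at hR
    exact containsCopy_completeBipartiteGraph hRT' hT' hR

theorem sum_update_threshold {k δ : ℕ} (hδ : (q - 1) * δ ≤ k) (i : Fin q) :
    ∑ j, Function.update (fun _ => k + δ) i (k - (q - 1) * δ) j = q * k := by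
  calc ∑ j, Function.update (fun _ => k + δ) i (k - (q - 1) * δ) j
      = k - (q - 1) * δ + (q - 1) * (k + δ) := by
        rw [sum_update_of_mem (mem_univ i)]
        simp [card_sdiff]
    _ = (q - 1 + 1) * k := by rw [mul_add, add_one_mul]; omega
    _ = q * k := by rw [Nat.sub_add_cancel NeZero.one_le]

theorem onlineRamsey_completeBipartiteGraph_le_of_choose_le {k δ n₁ n₂ : ℕ} (hst : s ≤ t)
    (htk : t ≤ q * k) (hδ : (q - 1) * δ ≤ k)
    (h₁ : q * k * (q * k).choose (t - s) * q ≤ n₁ * k.choose (t - s))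
    (hs : s * (q * k).choose t * q ≤ n₂ * (k - (q - 1) * δ).choose t)
    (ht : t * (q * k).choose t * q ≤ n₂ * (k + δ).choose t) :
    onlineRamsey q (completeBipartiteGraph (Fin t) (Fin t)) ≤ q * k * (n₁ + n₂) := by
  let X := range (q * k)
  let Y := Ico (q * k) (q * k + n₁)
  let Z := Ico (q * k + n₁) (q * k + n₁ + n₂)
  have hX : #X = q * k := card_range _
  have hY : #Y = n₁ := by simp [Y]
  have hZ : #Z = n₂ := by simp [Z]
  have hXY : Disjoint X Y := by
    rw [disjoint_left]; intro a; simp only [X, Y, mem_range, mem_Ico]; omega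
  have hXZ : Disjoint X Z := by
    rw [disjoint_left]; intro a; simp only [X, Z, mem_range, mem_Ico]; omega
  have hYZ : Disjoint Y Z := Ico_disjoint_Ico_consecutive _ _ _
  have hrounds : q * k * (n₁ + n₂) = q * k * #Z + #X * #Y := by rw [hX, hY, hZ]; ring
  rw [hrounds]
  refine onlineRamsey_le_of_canForce (CanForce.of_forall_bipartiteRounds hXY (by simp) fun c => ?_)
  obtain ⟨i, T, hTX, hT, S, hSY, hS, hc⟩ := exists_monochromatic_biclique (A := X) (B := Y)
    (τ := t - s) (fun x y => c s(x, y)) (d := fun _ => k) (n := fun _ => q * k)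
    (by omega) (by simp [hX]) (by simpa [hX, hY] using h₁)
  have hSZ : Disjoint S Z := disjoint_of_subset_left hSY hYZ
  rw [← hS, List.nil_append]
  refine canForce_of_isCompleteBetween (s := s)
    (d := Function.update (fun _ => k + δ) i (k - (q - 1) * δ))
    (isCompleteBetween_colourGraph_bipartiteRounds hXY hTX hSY hc) (by omega) (by omega) hSZ
    (disjoint_of_subset_left hTX hXZ) ?_ (by rw [sum_update_threshold hδ, hS])
    (by simpa [hS, hZ] using hs) fun j hj => by simpa [hS, hZ, hj] using ht
  exact fun x _ z hz => notMem_map_fst_bipartiteRounds c x (disjoint_right.1 hXZ hz)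
    (disjoint_right.1 hYZ hz)

end Strategy

/-! ### Estimates -/

section Estimates

variable {q t : ℕ}

theorem pow_le_exp_mul_pow {k D E : ℝ} {τ : ℕ} (hk : 0 ≤ k) (hD : 0 < D)
    (hE : τ * (k - D) ≤ E * D) : k ^ τ ≤ exp E * D ^ τ := by
  have hratio : k / D ≤ exp (k / D - 1) := by simpa using Real.add_one_le_exp (k / D - 1)
  have hexponent : τ * (k / D - 1) ≤ E := by
    rwa [div_sub_one hD.ne', ← mul_div_assoc, div_le_iff₀ hD]
  calc k ^ τ = (k / D) ^ τ * D ^ τ := by rw [← mul_pow, div_mul_cancel₀ k hD.ne']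
    _ ≤ exp (k / D - 1) ^ τ * D ^ τ := by gcongr
    _ = exp (τ * (k / D - 1)) * D ^ τ := by rw [Real.exp_nat_mul]
    _ ≤ exp E * D ^ τ := by gcongr

theorem choose_mul_le_exp_mul_choose {k d τ : ℕ} {E : ℝ} (hD : (0 : ℝ) < d + 1 - τ)
    (hE : τ * (k - (d + 1 - τ)) ≤ E * (d + 1 - τ)) :
    ((q * k).choose τ : ℝ) ≤ q ^ τ * exp E * d.choose τ := by
  have hτ : τ ≤ d + 1 := by
    have : (τ : ℝ) ≤ d + 1 := by linarith
    exact_mod_cast this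
  have hchoose : ((d : ℝ) + 1 - τ) ^ τ / τ.factorial ≤ d.choose τ := by
    simpa [Nat.cast_sub hτ] using Nat.pow_le_choose (α := ℝ) τ d
  calc ((q * k).choose τ : ℝ) ≤ ((q * k : ℕ) : ℝ) ^ τ / τ.factorial := Nat.choose_le_pow_div _ _
    _ = q ^ τ * ((k : ℝ) ^ τ / τ.factorial) := by push_cast; ring
    _ ≤ q ^ τ * (exp E * (d + 1 - τ) ^ τ / τ.factorial) := by
      gcongr
      exact pow_le_exp_mul_pow (Nat.cast_nonneg k) hD hE
    _ = q ^ τ * exp E * (((d : ℝ) + 1 - τ) ^ τ / τ.factorial) := by ring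
    _ ≤ q ^ τ * exp E * d.choose τ := by gcongr

theorem choose_mul_sq_le_three_mul_choose {τ : ℕ} (hτ : τ ≤ t) :
    (q * t ^ 2).choose τ ≤ 3 * q ^ τ * (t ^ 2).choose τ := by
  have hτR : (τ : ℝ) ≤ t := by exact_mod_cast hτ
  have hτsq : (τ : ℝ) ≤ τ ^ 2 := by exact_mod_cast Nat.le_self_pow two_ne_zero τ
  have hsq : (τ : ℝ) ^ 2 ≤ t ^ 2 := by gcongr
  have hexp : ((q * t ^ 2).choose τ : ℝ) ≤ q ^ τ * exp 1 * (t ^ 2).choose τ :=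
    choose_mul_le_exp_mul_choose (by push_cast; linarith) (by push_cast; linarith)
  have : ((q * t ^ 2).choose τ : ℝ) ≤ 3 * q ^ τ * (t ^ 2).choose τ := by
    calc ((q * t ^ 2).choose τ : ℝ) ≤ q ^ τ * exp 1 * (t ^ 2).choose τ := hexp
      _ ≤ q ^ τ * 3 * (t ^ 2).choose τ := by gcongr; exact Real.exp_one_lt_three.le
      _ = _ := by ring
  exact_mod_cast this

theorem choose_mul_sq_le_exp_mul_choose {d : ℕ} {x : ℝ} (hx : (|x| + 3) ^ 2 ≤ t)
    (hd : t ^ 2 + t * (x - 1) ≤ d) :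
    ((q * t ^ 2).choose t : ℝ) ≤ q ^ t * exp (3 - x) * d.choose t := by
  have hxneg : -|x| ≤ x := neg_abs_le x
  have hxle : x ≤ |x| := le_abs_self x
  have hxt : |x| + 3 ≤ t := by nlinarith [abs_nonneg x]
  have hD : (t : ℝ) * (t + x - 2) ≤ d + 1 - t := by linarith
  have ht : (0 : ℝ) < t := by linarith [abs_nonneg x]
  have hmul : (x - 3) * (x - 2) ≤ t := by nlinarith [sq_abs x]
  apply choose_mul_le_exp_mul_choose
  · exact (mul_pos ht (by linarith)).trans_le hD
  · have := mul_le_mul_of_nonneg_left hD (show (0 : ℝ) ≤ t + 3 - x by linarith)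
    have := mul_le_mul_of_nonneg_left hmul ht.le
    push_cast
    linarith

theorem mul_choose_mul_le_ceil_mul_choose {a d : ℕ} {x y : ℝ} (hx : (|x| + 3) ^ 2 ≤ t)
    (hd : t ^ 2 + t * (x - 1) ≤ d) (hy : a * exp (-x) ≤ y) :
    a * (q * t ^ 2).choose t * q ≤ ⌈exp 3 * q ^ (t + 1) * y⌉₊ * d.choose t := by
  have : (a * (q * t ^ 2).choose t * q : ℝ) ≤ ⌈exp 3 * q ^ (t + 1) * y⌉₊ * d.choose t := by
    calc (a * (q * t ^ 2).choose t * q : ℝ)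
        ≤ a * (q ^ t * exp (3 - x) * d.choose t) * q := by
          gcongr; exact choose_mul_sq_le_exp_mul_choose hx hd
      _ = exp 3 * q ^ (t + 1) * (a * exp (-x)) * d.choose t := by
          rw [sub_eq_add_neg, Real.exp_add]; ring
      _ ≤ exp 3 * q ^ (t + 1) * y * d.choose t := by gcongr
      _ ≤ ⌈exp 3 * q ^ (t + 1) * y⌉₊ * d.choose t := by gcongr; exact Nat.le_ceil _
  exact_mod_cast this

theorem sub_one_mul_floor_le {x : ℝ} (hq : 1 ≤ q) (hx : 0 ≤ x) :
    (((q - 1) * ⌊x⌋₊ : ℕ) : ℝ) ≤ (q - 1) * x := by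
  calc (((q - 1) * ⌊x⌋₊ : ℕ) : ℝ) ≤ (q - 1 : ℕ) * x := by
        push_cast; gcongr; exact Nat.floor_le hx
    _ = (q - 1) * x := by rw [Nat.cast_sub hq, Nat.cast_one]

theorem onlineRamsey_completeBipartiteGraph_le_of_mul_exp_le [NeZero q] {s : ℕ} {l : ℝ}
    (hl : 0 ≤ l) (hs : s * exp (q * l) ≤ t) (hlog : q * l ≤ log t) (ht : (log t + 3) ^ 2 ≤ t) :
    onlineRamsey q (completeBipartiteGraph (Fin t) (Fin t)) ≤
      q * t ^ 2 * (3 * q ^ 2 * t ^ 2 * q ^ (t - s) +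
        ⌈exp 3 * q ^ (t + 1) * (t * exp (-l))⌉₊) := by
  have hq1 : 1 ≤ q := NeZero.one_le
  have hqR : (1 : ℝ) ≤ q := by exact_mod_cast hq1
  have ht1 : (1 : ℝ) ≤ t := by
    have : t ≠ 0 := by rintro rfl; norm_num at ht
    exact_mod_cast Nat.one_le_iff_ne_zero.2 this
  have hst : s ≤ t := by
    have : (s : ℝ) ≤ t :=
      (le_mul_of_one_le_right (by positivity) (Real.one_le_exp (by positivity))).trans hs
    exact_mod_cast this
  have hshift {x : ℝ} (hx : |x| ≤ log t) : (|x| + 3) ^ 2 ≤ t := le_trans (by gcongr) ht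
  have hl_log : |l| ≤ log t := by
    rw [abs_of_nonneg hl]; exact (le_mul_of_one_le_left hl hqR).trans hlog
  have hm0 : 0 ≤ (q - 1) * l := mul_nonneg (by linarith) hl
  have hm_log : |-((q - 1) * l)| ≤ log t := by rw [abs_neg, abs_of_nonneg hm0]; linarith
  have hδ : (((q - 1) * ⌊t * l⌋₊ : ℕ) : ℝ) ≤ t * ((q - 1) * l) :=
    (sub_one_mul_floor_le hq1 (by positivity)).trans_eq (mul_left_comm _ _ _)
  have hδsq : (q - 1) * ⌊t * l⌋₊ ≤ t ^ 2 := by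
    have : (((q - 1) * ⌊t * l⌋₊ : ℕ) : ℝ) ≤ t * t := by
      refine hδ.trans ?_
      gcongr
      linarith [Real.log_le_self (Nat.cast_nonneg (α := ℝ) t)]
    rw [sq]
    exact_mod_cast this
  refine onlineRamsey_completeBipartiteGraph_le_of_choose_le hst ?_ hδsq ?_
    (mul_choose_mul_le_ceil_mul_choose (hshift hm_log) ?_ ?_)
    (mul_choose_mul_le_ceil_mul_choose (hshift hl_log) ?_ le_rfl)
  · exact (Nat.le_self_pow two_ne_zero t).trans (Nat.le_mul_of_pos_left _ hq1)
  · calc q * t ^ 2 * (q * t ^ 2).choose (t - s) * q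
        ≤ q * t ^ 2 * (3 * q ^ (t - s) * (t ^ 2).choose (t - s)) * q := by
          gcongr; exact choose_mul_sq_le_three_mul_choose (Nat.sub_le t s)
      _ = _ := by ring
  · push_cast [Nat.cast_sub hδsq] at hδ ⊢
    linarith
  · calc s * exp (- -((q - 1) * l)) = s * exp (q * l) * exp (-l) := by
          rw [mul_assoc, ← Real.exp_add]; ring_nf
      _ ≤ t * exp (-l) := by gcongr
  · push_cast
    linarith [Nat.lt_floor_add_one (t * l)]

theorem onlineRamsey_completeBipartiteGraph_le_rpow [NeZero q] {s : ℕ} (hs : 0 < s) (hst : s ≤ t)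
    (ht : (log t + 3) ^ 2 ≤ t) :
    (onlineRamsey q (completeBipartiteGraph (Fin t) (Fin t)) : ℝ) ≤
      q * t ^ 2 * (3 * q ^ 2 * t ^ 2 * q ^ (t - s) +
        (exp 3 * q ^ (t + 1) * (t * (s / t) ^ (1 / q : ℝ)) + 1)) := by
  have hq0 : (0 : ℝ) < q := by exact_mod_cast NeZero.pos q
  have hs1 : (1 : ℝ) ≤ s := by exact_mod_cast hs
  have hstR : (s : ℝ) ≤ t := by exact_mod_cast hst
  have ht0 : (0 : ℝ) < t := by linarith
  let l : ℝ := log (t / s) / q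
  have hql : q * l = log (t / s) := mul_div_cancel₀ _ hq0.ne'
  have hl : 0 ≤ l := div_nonneg (Real.log_nonneg ((one_le_div (by linarith)).2 hstR)) hq0.le
  have hsl : s * exp (q * l) ≤ t := by
    rw [hql, Real.exp_log (by positivity), mul_div_cancel₀ _ (by positivity)]
  have hlog : q * l ≤ log t := by
    rw [hql]
    exact Real.log_le_log (by positivity) (div_le_self ht0.le hs1)
  have hexp : exp (-l) = (s / t) ^ (1 / q : ℝ) := by
    rw [Real.rpow_def_of_pos (by positivity), ← inv_div, Real.log_inv]
    congr 1
    ring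
  have hbound := onlineRamsey_completeBipartiteGraph_le_of_mul_exp_le hl hsl hlog ht
  rw [hexp] at hbound
  calc (onlineRamsey q (completeBipartiteGraph (Fin t) (Fin t)) : ℝ)
      ≤ q * t ^ 2 * (3 * q ^ 2 * t ^ 2 * q ^ (t - s) +
          ⌈exp 3 * q ^ (t + 1) * (t * (s / t) ^ (1 / q : ℝ))⌉₊) := by exact_mod_cast hbound
    _ ≤ _ := by gcongr; exact (Nat.ceil_lt_add_one (by positivity)).le

theorem two_mul_clog_le_four_mul_logb (hq : 1 < q) (hqt : q ≤ t) :
    (2 * Nat.clog q t : ℝ) ≤ 4 * logb q t := by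
  have hqR : (1 : ℝ) < q := by exact_mod_cast hq
  have hlogb : 1 ≤ logb q t := by
    have hqtR : (q : ℝ) ≤ t := by exact_mod_cast hqt
    rwa [Real.le_logb_iff_rpow_le hqR (by linarith), Real.rpow_one]
  have hceil := Nat.ceil_lt_add_one (zero_le_one.trans hlogb)
  rw [Real.natCeil_logb_natCast] at hceil
  linarith

theorem two_mul_clog_le_self (hq : 1 < q) (hqt : q ≤ t) (ht : (log t + 3) ^ 2 ≤ t) :
    2 * Nat.clog q t ≤ t := by
  have hlogt : 0 ≤ log t := Real.log_natCast_nonneg t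
  have hlogq : 1 / 2 ≤ log q := by
    have : log 2 ≤ log q := Real.log_le_log (by norm_num) (by exact_mod_cast hq)
    linarith [Real.log_two_gt_d9]
  have hlogb : logb q t ≤ 2 * log t := by
    rw [logb, div_le_iff₀ (by linarith)]
    nlinarith
  have : (2 * Nat.clog q t : ℝ) ≤ t := by
    nlinarith [two_mul_clog_le_four_mul_logb hq hqt, sq_nonneg (log t - 1)]
  exact_mod_cast this

theorem sq_mul_pow_sub_two_mul_clog_le (hq : 1 < q) (hclog : 2 * Nat.clog q t ≤ t) :
    t ^ 2 * q ^ (t - 2 * Nat.clog q t) ≤ q ^ t := by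
  calc t ^ 2 * q ^ (t - 2 * Nat.clog q t)
      ≤ (q ^ Nat.clog q t) ^ 2 * q ^ (t - 2 * Nat.clog q t) := by
        gcongr; exact Nat.le_pow_clog hq t
    _ = q ^ t := by rw [← pow_mul, ← pow_add]; congr 1; omega

theorem pow_three_mul_div_rpow_le {s t L p : ℝ} (ht : 0 < t) (hs : 0 ≤ s) (hsL : s ≤ 4 * L)
    (hp : 0 ≤ p) (hp2 : p ≤ 1 / 2) : t ^ 3 * (s / t) ^ p ≤ 2 * (t ^ (3 - p) * L ^ p) := by
  have hL : 0 ≤ L := by linarith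
  have hfour : (4 : ℝ) ^ p ≤ 2 := by
    calc (4 : ℝ) ^ p ≤ 4 ^ (1 / 2 : ℝ) := Real.rpow_le_rpow_of_exponent_le (by norm_num) hp2
      _ = 2 := by
        rw [← Real.sqrt_eq_rpow, show (4 : ℝ) = 2 ^ 2 by norm_num, Real.sqrt_sq zero_le_two]
  calc t ^ 3 * (s / t) ^ p ≤ t ^ 3 * (4 * L / t) ^ p := by gcongr
    _ = 4 ^ p * (t ^ (3 - p) * L ^ p) := by
      rw [Real.div_rpow (by positivity) ht.le, Real.mul_rpow (by norm_num) hL, Real.rpow_sub ht,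
        show t ^ (3 : ℝ) = t ^ 3 by norm_cast]
      ring
    _ ≤ 2 * (t ^ (3 - p) * L ^ p) := by gcongr

theorem three_mul_mul_sq_le_rpow_mul_rpow {q t L p : ℝ} (hqt : (3 * q) ^ 2 ≤ t) (ht : 1 ≤ t)
    (hL : 1 ≤ L) (hp : 0 ≤ p) (hp2 : p ≤ 1 / 2) : 3 * q * t ^ 2 ≤ t ^ (3 - p) * L ^ p := by
  calc 3 * q * t ^ 2 ≤ t ^ (1 / 2 : ℝ) * t ^ (2 : ℝ) := by
        rw [Real.rpow_two, ← Real.sqrt_eq_rpow]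
        gcongr
        exact Real.le_sqrt_of_sq_le hqt
    _ = t ^ (1 / 2 + 2 : ℝ) := (Real.rpow_add (by linarith) _ _).symm
    _ ≤ t ^ (3 - p) := Real.rpow_le_rpow_of_exponent_le ht (by linarith)
    _ ≤ t ^ (3 - p) * L ^ p :=
      le_mul_of_one_le_right (by positivity) (Real.one_le_rpow hL hp)

theorem exp_three_le : exp 3 ≤ 23 := by
  calc exp 3 = exp 1 ^ 3 := by rw [← Real.exp_nat_mul]; norm_num
    _ ≤ 2.8 ^ 3 := by gcongr; linarith [Real.exp_one_lt_d9]
    _ ≤ 23 := by norm_num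

theorem onlineRamsey_completeBipartiteGraph_le_of_sq_le (hq : 2 ≤ q) (hqt : (3 * q : ℝ) ^ 2 ≤ t)
    (ht : (log t + 3) ^ 2 ≤ t) :
    (onlineRamsey q (completeBipartiteGraph (Fin t) (Fin t)) : ℝ) ≤
      48 * (q : ℝ) ^ (t + 2) * (t : ℝ) ^ (3 - 1 / (q : ℝ)) * (logb q t) ^ (1 / (q : ℝ)) := by
  have : NeZero q := ⟨by omega⟩
  have hqR : (2 : ℝ) ≤ q := by exact_mod_cast hq
  have hqtR : (q : ℝ) ≤ t := by nlinarith
  have ht0 : (0 : ℝ) < t := by linarith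
  have hqt' : q ≤ t := by exact_mod_cast hqtR
  have hp : 1 / (q : ℝ) ≤ 1 / 2 := by gcongr
  have hlogb : 1 ≤ logb q t := by
    rwa [Real.le_logb_iff_rpow_le (by linarith) ht0, Real.rpow_one]
  let s := 2 * Nat.clog q t
  have hs : 0 < s := Nat.mul_pos two_pos (Nat.clog_pos (by omega) (by omega))
  have hsL : (s : ℝ) ≤ 4 * logb q t := by
    exact_mod_cast two_mul_clog_le_four_mul_logb (by omega) hqt'
  have hst : s ≤ t := two_mul_clog_le_self (by omega) hqt' ht
  set F := (t : ℝ) ^ (3 - 1 / (q : ℝ)) * logb q t ^ (1 / (q : ℝ))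
  have hqF : 3 * q * t ^ 2 ≤ F :=
    three_mul_mul_sq_le_rpow_mul_rpow hqt (by linarith) hlogb (by positivity) hp
  have hstage₁ : (t : ℝ) ^ 2 * q ^ (t - s) ≤ q ^ t := by
    exact_mod_cast sq_mul_pow_sub_two_mul_clog_le (by omega) hst
  have hstage₂ : t ^ 3 * (s / t) ^ (1 / q : ℝ) ≤ 2 * F :=
    pow_three_mul_div_rpow_le ht0 (Nat.cast_nonneg s) hsL (by positivity) hp
  have hround : q * (t : ℝ) ^ 2 ≤ q ^ (t + 2) * F := by
    have hF : q * (t : ℝ) ^ 2 ≤ F := by nlinarith [sq_nonneg (t : ℝ)]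
    exact hF.trans (le_mul_of_one_le_left (by positivity) (one_le_pow₀ (by linarith)))
  calc (onlineRamsey q (completeBipartiteGraph (Fin t) (Fin t)) : ℝ)
      ≤ q * t ^ 2 * (3 * q ^ 2 * t ^ 2 * q ^ (t - s) +
          (exp 3 * q ^ (t + 1) * (t * (s / t) ^ (1 / q : ℝ)) + 1)) :=
        onlineRamsey_completeBipartiteGraph_le_rpow hs hst ht
    _ = q ^ 2 * (3 * q * t ^ 2) * (t ^ 2 * q ^ (t - s)) +
          exp 3 * q ^ (t + 2) * (t ^ 3 * (s / t) ^ (1 / q : ℝ)) + q * t ^ 2 := by ring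
    _ ≤ q ^ 2 * F * q ^ t + 23 * q ^ (t + 2) * (2 * F) + q ^ (t + 2) * F := by
        gcongr; exact exp_three_le
    _ = 48 * q ^ (t + 2) * F := by ring
    _ = _ := by ring

theorem eventually_log_add_three_sq_le :
    ∀ᶠ x : ℝ in atTop, (log x + 3) ^ 2 ≤ x := by
  have hlog : ∀ᶠ y : ℝ in atTop, ‖log y ^ 2‖ ≤ exp (-3) * ‖y‖ :=
    Real.isLittleO_pow_log_id_atTop.bound (Real.exp_pos _)
  have hscale : Filter.Tendsto (fun x : ℝ => exp 3 * x) atTop atTop :=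
    Filter.tendsto_id.const_mul_atTop (Real.exp_pos 3)
  filter_upwards [hscale.eventually hlog, Filter.eventually_gt_atTop 0] with x hx hx0
  rw [Real.log_mul (by positivity) hx0.ne', Real.log_exp, Real.norm_of_nonneg (by positivity),
    Real.norm_of_nonneg (by positivity), ← mul_assoc, ← Real.exp_add] at hx
  simpa [add_comm] using hx

end Estimates

/-- For `q ≥ 2` and sufficiently large `t`,
`r̃_q(K_{t,t}) ≤ 48 q^{t+2} t^{3-1/q} (log_q t)^{1/q}`. -/
theorem online_ramsey_bipartite_q (q : ℕ) (hq : 2 ≤ q) :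
    ∃ t₀ : ℕ, ∀ t : ℕ, t₀ ≤ t →
      (onlineRamsey q (completeBipartiteGraph (Fin t) (Fin t)) : ℝ) ≤
        48 * (q : ℝ) ^ (t + 2) * (t : ℝ) ^ (3 - 1 / (q : ℝ)) *
          (Real.logb q t) ^ (1 / (q : ℝ)) := by
  have hqt : ∀ᶠ t : ℕ in atTop, (3 * q : ℝ) ^ 2 ≤ t :=
    tendsto_natCast_atTop_atTop.eventually_ge_atTop _
  have hlog : ∀ᶠ t : ℕ in atTop, (log t + 3) ^ 2 ≤ t :=
    tendsto_natCast_atTop_atTop.eventually eventually_log_add_three_sq_le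
  obtain ⟨t₀, ht₀⟩ := Filter.eventually_atTop.1 (hqt.and hlog)
  exact ⟨t₀, fun t ht =>
    onlineRamsey_completeBipartiteGraph_le_of_sq_le hq (ht₀ t ht).1 (ht₀ t ht).2⟩
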